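/- Under Assumptions 1, 2 and 3, the sequence Q_n is asymptotically efficient (R_Q(B) exists and equals 2 I_P(B)) if and only if λ_Q^B(−2) = 2 λ_Q^B(−1), where λ_Q^B(k) := sup_{w∈ℝ} {k w − I_Q^B(w)} is the Legendre–Fenchel transform of I_Q^B(w) := inf_{m∈B̄} J_Q(m,w). -/

import Mathlib

open MeasureTheory Filter Set Topology
open scoped ENNReal NNReal

/-- A sequence of measures satisfies the large deviation principle with rate function `I`:
upper bound over closed sets and lower bound over open sets, at exponential speed `n`. -/
def SatisfiesLDP {X : Type*} [TopologicalSpace X] [MeasurableSpace X]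
    (mu : ℕ → Measure X) (I : X → ℝ≥0∞) : Prop :=
  (∀ F : Set X, IsClosed F →
      limsup (fun n : ℕ => (((n : ℝ)⁻¹ : ℝ) : EReal) * ENNReal.log (mu n F)) atTop
        ≤ -(⨅ x ∈ F, (I x : EReal))) ∧
  (∀ G : Set X, IsOpen G →
      -(⨅ x ∈ G, (I x : EReal)) ≤
        liminf (fun n : ℕ => (((n : ℝ)⁻¹ : ℝ) : EReal) * ENNReal.log (mu n G)) atTop)

/-- A good rate function: lower semicontinuous with compact sublevel sets. -/
def IsGoodRate {X : Type*} [TopologicalSpace X] (I : X → ℝ≥0∞) : Prop :=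
  LowerSemicontinuous I ∧ ∀ c : ℝ≥0∞, c ≠ ⊤ → IsCompact {x | I x ≤ c}

/-- The subdifferential of an extended-real-valued function on ℝ at a point. -/
def Subdiff (f : ℝ → EReal) (x : ℝ) : Set ℝ :=
  {k | ∀ y : ℝ, f x + ((k * (y - x) : ℝ) : EReal) ≤ f y}

/-- `(1/n) log x` as an extended real number. -/
noncomputable def expRate (n : ℕ) (x : ℝ≥0∞) : EReal :=
  (((n : ℝ)⁻¹ : ℝ) : EReal) * ENNReal.log x

/-- The action `W_n = -(1/n) log (dP/dQ)`. -/
noncomputable def action {Λ : Type*} [MeasurableSpace Λ]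
    (P Q : Measure Λ) (n : ℕ) (x : Λ) : ℝ :=
  -(n : ℝ)⁻¹ * Real.log ((P.rnDeriv Q) x).toReal

/-!
Since `L_n = exp (-n W_n)`, the truncated moment `E_{Q_n}[L_n ^ k 1_{M_n ∈ A}]` is a Laplace
integral for the law of `(M_n, W_n)`, so Varadhan's lemma gives it the exponential rate
`λ_Q^A(-k)`: from below for open `A`, and from above for closed `A` as soon as a moment of higher
order is under control.  For `k = 2` this identifies `R_Q(B)` with `-λ_Q^B(-2)`.  For `k = 1` the
moment is `P_n(M_n ∈ A)`, whose rate is also given by `I_P`, and uniqueness of rate functions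
yields `λ_Q^B(-1) = -I_P(B)`.
-/

open ExpGrowth

section ExtendedReals

lemma coe_sub_le_comm (a : ℝ) (b c : EReal) : (a : EReal) - b ≤ c ↔ (a : EReal) - c ≤ b := by
  induction b <;> induction c <;> simp [← EReal.coe_sub, add_comm]

lemma coe_sub_iInf {ι : Sort*} (a : ℝ) (f : ι → EReal) :
    (a : EReal) - ⨅ i, f i = ⨆ i, ((a : EReal) - f i) :=
  eq_of_forall_ge_iff fun c => by simp only [coe_sub_le_comm, iSup_le_iff, le_iInf_iff]

lemma coe_ennreal_iInf {ι : Sort*} (f : ι → ℝ≥0∞) :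
    ((⨅ i, f i : ℝ≥0∞) : EReal) = ⨅ i, (f i : EReal) :=
  EReal.coe_ennreal_strictMono.monotone.map_iInf_of_continuousAt
    continuous_coe_ennreal_ereal.continuousAt EReal.coe_ennreal_top

lemma exp_coe_mul_natCast_le {a b : ℝ} (h : a ≤ b) (n : ℕ) :
    EReal.exp ((a : EReal) * n) ≤ EReal.exp ((b : EReal) * n) := by
  gcongr

end ExtendedReals

section ExponentialRates

lemma expRate_eq_log_div (n : ℕ) (x : ℝ≥0∞) : expRate n x = ENNReal.log x / n := by
  rw [expRate, EReal.div_eq_inv_mul, EReal.coe_inv, EReal.coe_coe_eq_natCast]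

lemma limsup_expRate (u : ℕ → ℝ≥0∞) :
    limsup (fun n => expRate n (u n)) atTop = expGrowthSup u := by
  simp only [expRate_eq_log_div, expGrowthSup_def]
  rfl

lemma liminf_expRate (u : ℕ → ℝ≥0∞) :
    liminf (fun n => expRate n (u n)) atTop = expGrowthInf u := by
  simp only [expRate_eq_log_div, expGrowthInf_def]
  rfl

lemma expGrowthSup_exp_mul_le (a : ℝ) (u : ℕ → ℝ≥0∞) :
    expGrowthSup ((fun n : ℕ => EReal.exp ((a : EReal) * n)) * u) ≤ a + expGrowthSup u :=
  calc expGrowthSup ((fun n : ℕ => EReal.exp ((a : EReal) * n)) * u)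
      ≤ expGrowthSup (fun n : ℕ => EReal.exp ((a : EReal) * n)) + expGrowthSup u := by
        apply expGrowthSup_mul_le <;> rw [expGrowthSup_exp] <;> simp
    _ = a + expGrowthSup u := by rw [expGrowthSup_exp]

end ExponentialRates

namespace SatisfiesLDP

variable {E : Type*} [TopologicalSpace E] [MeasurableSpace E] {μ : ℕ → Measure E} {I : E → ℝ≥0∞}

lemma expGrowthSup_le (hμ : SatisfiesLDP μ I) {F : Set E} (hF : IsClosed F) :
    expGrowthSup (fun n => μ n F) ≤ -⨅ x ∈ F, (I x : EReal) :=
  (limsup_expRate _).symm.trans_le (hμ.1 F hF)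

lemma le_expGrowthInf (hμ : SatisfiesLDP μ I) {G : Set E} (hG : IsOpen G) :
    -⨅ x ∈ G, (I x : EReal) ≤ expGrowthInf (fun n => μ n G) :=
  (hμ.2 G hG).trans_eq (liminf_expRate _)

lemma expGrowthSup_nonpos (hμ : SatisfiesLDP μ I) (A : Set E) :
    expGrowthSup (fun n => μ n A) ≤ 0 :=
  calc expGrowthSup (fun n => μ n A)
      ≤ expGrowthSup (fun n => μ n univ) :=
        expGrowthSup_monotone fun n => measure_mono (subset_univ A)
    _ ≤ -⨅ x ∈ univ, (I x : EReal) := hμ.expGrowthSup_le isClosed_univ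
    _ ≤ 0 := by
        rw [EReal.neg_le, neg_zero]
        exact le_iInf₂ fun _ _ => EReal.coe_ennreal_nonneg _

lemma rate_le_of_forall_isOpen [RegularSpace E] (hμ : SatisfiesLDP μ I)
    (hI : LowerSemicontinuous I) {x : E} {a : EReal}
    (ha : ∀ G, IsOpen G → x ∈ G → -a ≤ expGrowthInf (fun n => μ n G)) : (I x : EReal) ≤ a := by
  have hI_coe : LowerSemicontinuous fun y => (I y : EReal) :=
    continuous_coe_ennreal_ereal.comp_lowerSemicontinuous hI EReal.coe_ennreal_strictMono.monotone
  refine le_of_forall_lt fun c hc => ?_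
  obtain ⟨c', hcc', hc'⟩ := exists_between hc
  refine hcc'.trans_le ?_
  obtain ⟨V, hV_nhds, hV_closed, hV⟩ := exists_mem_nhds_isClosed_subset (hI_coe x c' hc')
  have le_inf : c' ≤ ⨅ y ∈ V, (I y : EReal) := le_iInf₂ fun y hy => (hV hy).le
  refine le_inf.trans (EReal.neg_le_neg_iff.1 ?_)
  calc -a
      ≤ expGrowthInf (fun n => μ n (interior V)) :=
        ha _ isOpen_interior (mem_interior_iff_mem_nhds.2 hV_nhds)
    _ ≤ expGrowthInf (fun n => μ n V) :=
        expGrowthInf_monotone fun n => measure_mono interior_subset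
    _ ≤ expGrowthSup (fun n => μ n V) := expGrowthInf_le_expGrowthSup
    _ ≤ -⨅ y ∈ V, (I y : EReal) := hμ.expGrowthSup_le hV_closed

end SatisfiesLDP

section LaplaceIntegral

variable {E : Type*} [MeasurableSpace E]

/-- The Laplace integral `∫_A exp (n φ) dμ_n`, as a sequence in `n`, whose exponential rate is the
object of Varadhan's lemma. -/
noncomputable def laplaceIntegral (μ : ℕ → Measure E) (φ : E → ℝ) (A : Set E) (n : ℕ) : ℝ≥0∞ :=
  ∫⁻ x in A, EReal.exp ((φ x : EReal) * n) ∂μ n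

variable {μ : ℕ → Measure E} {φ : E → ℝ} {A A' : Set E}

lemma laplaceIntegral_mono (h : A ⊆ A') : laplaceIntegral μ φ A ≤ laplaceIntegral μ φ A' :=
  fun _ => lintegral_mono_set h

lemma expGrowthSup_laplaceIntegral_union_le :
    expGrowthSup (laplaceIntegral μ φ (A ∪ A')) ≤
      expGrowthSup (laplaceIntegral μ φ A) ⊔ expGrowthSup (laplaceIntegral μ φ A') :=
  calc expGrowthSup (laplaceIntegral μ φ (A ∪ A'))
      ≤ expGrowthSup (laplaceIntegral μ φ A + laplaceIntegral μ φ A') :=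
        expGrowthSup_monotone fun _ => lintegral_union_le _ _ _
    _ = _ := expGrowthSup_add

lemma expGrowthSup_laplaceIntegral_le_of_forall_nhds {K : Type*} [TopologicalSpace K]
    [CompactSpace K] (f : E → K) {z : EReal}
    (h : ∀ y, ∃ U ∈ 𝓝 y, expGrowthSup (laplaceIntegral μ φ (A ∩ f ⁻¹' U)) ≤ z) :
    expGrowthSup (laplaceIntegral μ φ A) ≤ z := by
  let bounded (U : Set K) : Prop := expGrowthSup (laplaceIntegral μ φ (A ∩ f ⁻¹' U)) ≤ z
  suffices bounded univ by simpa only [bounded, preimage_univ, inter_univ] using this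
  refine isCompact_univ.induction_on (p := bounded) ?_ ?_ ?_ ?_
  · have laplaceIntegral_empty : laplaceIntegral μ φ ∅ = 0 := funext fun n => setLIntegral_empty _
    simp only [bounded, preimage_empty, inter_empty, laplaceIntegral_empty, expGrowthSup_zero,
      bot_le]
  · intro U V hUV hV
    exact (expGrowthSup_monotone (laplaceIntegral_mono (by gcongr))).trans hV
  · intro U V hU hV
    simp only [bounded, preimage_union, inter_union_distrib_left]
    exact expGrowthSup_laplaceIntegral_union_le.trans (sup_le hU hV)
  · simpa only [nhdsWithin_univ] using fun y _ => h y

lemma expGrowthSup_laplaceIntegral_le_add {b : ℝ} (h : ∀ x ∈ A, φ x ≤ b) :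
    expGrowthSup (laplaceIntegral μ φ A) ≤ b + expGrowthSup (fun n => μ n A) := by
  refine (expGrowthSup_monotone fun n => ?_).trans (expGrowthSup_exp_mul_le b _)
  rw [Pi.mul_apply, ← setLIntegral_const]
  exact setLIntegral_mono measurable_const fun x hx => exp_coe_mul_natCast_le (h x hx) n

lemma add_expGrowthInf_le_expGrowthInf_laplaceIntegral (hA : MeasurableSet A) {a : ℝ}
    (h : ∀ x ∈ A, a ≤ φ x) :
    a + expGrowthInf (fun n => μ n A) ≤ expGrowthInf (laplaceIntegral μ φ A) :=
  calc a + expGrowthInf (fun n => μ n A)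
      = expGrowthInf (fun n : ℕ => EReal.exp ((a : EReal) * n)) +
          expGrowthInf (fun n => μ n A) := by
        rw [expGrowthInf_exp]
    _ ≤ expGrowthInf ((fun n : ℕ => EReal.exp ((a : EReal) * n)) * fun n => μ n A) :=
        le_expGrowthInf_mul
    _ ≤ expGrowthInf (laplaceIntegral μ φ A) := by
        refine expGrowthInf_monotone fun n => ?_
        rw [Pi.mul_apply, ← setLIntegral_const]
        exact setLIntegral_mono' hA fun x hx => exp_coe_mul_natCast_le (h x hx) n

lemma expGrowthSup_laplaceIntegral_le_of_moment (hA : MeasurableSet A) {γ a : ℝ} (hγ : 1 ≤ γ)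
    (h : ∀ x ∈ A, a ≤ φ x) :
    expGrowthSup (laplaceIntegral μ φ A) ≤
      ((-((γ - 1) * a) : ℝ) : EReal) +
        expGrowthSup (laplaceIntegral μ (fun x => γ * φ x) A) := by
  refine (expGrowthSup_monotone fun n => ?_).trans (expGrowthSup_exp_mul_le _ _)
  have exp_ne_top : EReal.exp (((-((γ - 1) * a) : ℝ) : EReal) * n) ≠ ∞ := by
    rw [← EReal.coe_coe_eq_natCast, ← EReal.coe_mul, EReal.exp_coe]
    exact ENNReal.ofReal_ne_top
  rw [Pi.mul_apply, laplaceIntegral, laplaceIntegral, ← lintegral_const_mul' _ _ exp_ne_top]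
  refine setLIntegral_mono' hA fun x hx => ?_
  have tilt : φ x ≤ -((γ - 1) * a) + γ * φ x := by nlinarith [h x hx]
  calc EReal.exp ((φ x : EReal) * n)
      ≤ EReal.exp (((-((γ - 1) * a) + γ * φ x : ℝ) : EReal) * n) := exp_coe_mul_natCast_le tilt n
    _ = _ := by
        rw [← EReal.exp_add, ← EReal.coe_coe_eq_natCast]
        norm_cast
        rw [add_mul]

lemma exists_expGrowthSup_laplaceIntegral_preimage_Ici_le {γ : ℝ} (hγ : 1 < γ)
    (hA : ∀ a, MeasurableSet (A ∩ φ ⁻¹' Ici a))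
    (hmom : expGrowthSup (laplaceIntegral μ (fun x => γ * φ x) A) < ⊤) (z : ℝ) :
    ∃ a : ℝ, expGrowthSup (laplaceIntegral μ φ (A ∩ φ ⁻¹' Ici a)) ≤ z := by
  obtain ⟨m, hm, -⟩ := EReal.lt_iff_exists_real_btwn.1 hmom
  have hγ' : γ - 1 ≠ 0 := (sub_pos.2 hγ).ne'
  refine ⟨(m - z) / (γ - 1), ?_⟩
  calc expGrowthSup (laplaceIntegral μ φ (A ∩ φ ⁻¹' Ici ((m - z) / (γ - 1))))
      ≤ ((-((γ - 1) * ((m - z) / (γ - 1))) : ℝ) : EReal) + expGrowthSup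
          (laplaceIntegral μ (fun x => γ * φ x) (A ∩ φ ⁻¹' Ici ((m - z) / (γ - 1)))) :=
        expGrowthSup_laplaceIntegral_le_of_moment (hA _) hγ.le fun _ hx => hx.2
    _ ≤ ((-((γ - 1) * ((m - z) / (γ - 1))) : ℝ) : EReal) + m := by
        gcongr
        exact (expGrowthSup_monotone (laplaceIntegral_mono inter_subset_left)).trans hm.le
    _ = z := by
        rw [← EReal.coe_add, EReal.coe_eq_coe_iff]
        field_simp
        ring

end LaplaceIntegral

namespace SatisfiesLDP

variable {E : Type*} [TopologicalSpace E] [MeasurableSpace E]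
  {μ : ℕ → Measure E} {J : E → ℝ≥0∞} {φ : E → ℝ}

theorem biSup_sub_le_expGrowthInf_laplaceIntegral [OpensMeasurableSpace E] (hμ : SatisfiesLDP μ J)
    (hφ : LowerSemicontinuous φ) {G : Set E} (hG : IsOpen G) :
    ⨆ x ∈ G, ((φ x : EReal) - J x) ≤ expGrowthInf (laplaceIntegral μ φ G) := by
  refine iSup₂_le fun x hx => ?_
  rcases eq_or_ne (J x) ⊤ with hJ | hJ
  · simp [hJ]
  refine EReal.sub_le_of_le_add (EReal.ge_of_forall_gt_iff_ge.1 fun a ha => ?_)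
  rw [← EReal.sub_le_iff_le_add (.inl (EReal.coe_ennreal_ne_bot _)) (.inl (by simpa using hJ))]
  rw [EReal.coe_lt_coe_iff] at ha
  have hU : IsOpen (G ∩ φ ⁻¹' Ioi a) := hG.inter (hφ.isOpen_preimage a)
  calc (a : EReal) - J x
      ≤ a + -⨅ y ∈ G ∩ φ ⁻¹' Ioi a, (J y : EReal) := by
        rw [sub_eq_add_neg]
        gcongr
        exact EReal.neg_le_neg_iff.2 (iInf₂_le x ⟨hx, ha⟩)
    _ ≤ a + expGrowthInf (fun n => μ n (G ∩ φ ⁻¹' Ioi a)) := by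
        gcongr
        exact hμ.le_expGrowthInf hU
    _ ≤ expGrowthInf (laplaceIntegral μ φ (G ∩ φ ⁻¹' Ioi a)) :=
        add_expGrowthInf_le_expGrowthInf_laplaceIntegral hU.measurableSet fun _ hy => hy.2.le
    _ ≤ expGrowthInf (laplaceIntegral μ φ G) :=
        expGrowthInf_monotone (laplaceIntegral_mono inter_subset_left)

lemma expGrowthSup_laplaceIntegral_preimage_Icc_le (hμ : SatisfiesLDP μ J)
    (hφ : UpperSemicontinuous φ) {C : Set E} (hC : IsClosed C) {s : ℝ}
    (hs : ∀ x ∈ C, (φ x : EReal) - J x ≤ s) (a b : ℝ) :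
    expGrowthSup (laplaceIntegral μ φ (C ∩ φ ⁻¹' Icc a b)) ≤ ((s + (b - a) : ℝ) : EReal) := by
  have rate_ge : ((a - s : ℝ) : EReal) ≤ ⨅ x ∈ C ∩ φ ⁻¹' Ici a, (J x : EReal) := by
    refine le_iInf₂ fun x hx => ?_
    calc ((a - s : ℝ) : EReal) ≤ (φ x : EReal) - s := by
          exact_mod_cast sub_le_sub_right (show a ≤ φ x from hx.2) s
      _ ≤ J x := (coe_sub_le_comm _ _ _).1 (hs x hx.1)
  calc expGrowthSup (laplaceIntegral μ φ (C ∩ φ ⁻¹' Icc a b))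
      ≤ b + expGrowthSup (fun n => μ n (C ∩ φ ⁻¹' Icc a b)) :=
        expGrowthSup_laplaceIntegral_le_add fun _ hx => hx.2.2
    _ ≤ b + expGrowthSup (fun n => μ n (C ∩ φ ⁻¹' Ici a)) := by
        gcongr
        exact expGrowthSup_monotone fun n => measure_mono (by gcongr; exact Icc_subset_Ici_self)
    _ ≤ b + -⨅ x ∈ C ∩ φ ⁻¹' Ici a, (J x : EReal) := by
        gcongr
        exact hμ.expGrowthSup_le (hC.inter (hφ.isClosed_preimage a))
    _ ≤ b + -((a - s : ℝ) : EReal) := by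
        gcongr
        exact EReal.neg_le_neg_iff.2 rate_ge
    _ = ((s + (b - a) : ℝ) : EReal) := by
        norm_cast
        ring

theorem expGrowthSup_laplaceIntegral_le_biSup_sub [OpensMeasurableSpace E] (hμ : SatisfiesLDP μ J)
    (hφ : UpperSemicontinuous φ) {C : Set E} (hC : IsClosed C) {γ : ℝ} (hγ : 1 < γ)
    (hmom : expGrowthSup (laplaceIntegral μ (fun x => γ * φ x) C) < ⊤) :
    expGrowthSup (laplaceIntegral μ φ C) ≤ ⨆ x ∈ C, ((φ x : EReal) - J x) := by
  refine EReal.le_of_forall_lt_iff_le.1 fun z hz => ?_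
  obtain ⟨s, hs, hsz⟩ := EReal.lt_iff_exists_real_btwn.1 hz
  have sub_le : ∀ x ∈ C, (φ x : EReal) - J x ≤ s := fun x hx => (le_iSup₂ x hx).trans hs.le
  -- `φ` takes values in the compact space `EReal`, so a local bound suffices: near `⊥` the
  -- integrand is small, near `⊤` the higher moment takes over, near a real value the LDP applies.
  refine expGrowthSup_laplaceIntegral_le_of_forall_nhds (fun x => (φ x : EReal)) fun c => ?_
  induction c with
  | bot =>
    refine ⟨Iic z, Iic_mem_nhds (EReal.bot_lt_coe z), ?_⟩
    refine (expGrowthSup_laplaceIntegral_le_add fun x hx => EReal.coe_le_coe_iff.1 hx.2).trans ?_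
    exact add_le_of_nonpos_right (hμ.expGrowthSup_nonpos _)
  | top =>
    obtain ⟨a, ha⟩ := exists_expGrowthSup_laplaceIntegral_preimage_Ici_le hγ
      (fun a => (hC.inter (hφ.isClosed_preimage a)).measurableSet) hmom z
    refine ⟨Ici a, Ici_mem_nhds (EReal.coe_lt_top a), ?_⟩
    simpa only [preimage, mem_Ici, EReal.coe_le_coe_iff] using ha
  | coe r =>
    have hε : 0 < (z - s) / 2 := half_pos (sub_pos.2 (EReal.coe_lt_coe_iff.1 hsz))
    have hIcc := hμ.expGrowthSup_laplaceIntegral_preimage_Icc_le hφ hC sub_le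
      (r - (z - s) / 2) (r + (z - s) / 2)
    refine ⟨Icc ((r - (z - s) / 2 : ℝ) : EReal) ((r + (z - s) / 2 : ℝ) : EReal),
      Icc_mem_nhds (by exact_mod_cast sub_lt_self r hε)
        (by exact_mod_cast lt_add_of_pos_right r hε), ?_⟩
    convert hIcc using 2
    · simp only [preimage, mem_Icc, EReal.coe_le_coe_iff]
    · ring

end SatisfiesLDP

section LegendreTransform

variable {X : Type*} (J : X × ℝ → ℝ≥0∞) (A : Set X) (k : ℝ)

/-- `λ^A(k) = sup_w (k w - inf_{m ∈ A} J(m, w))`, the Legendre–Fenchel transform of the rate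
function of the second coordinate restricted to `A`. -/
noncomputable def legendreTransformOn : EReal :=
  ⨆ w : ℝ, (((k * w : ℝ) : EReal) - ⨅ m ∈ A, (J (m, w) : EReal))

lemma legendreTransformOn_eq_biSup :
    legendreTransformOn J A k = ⨆ p ∈ A ×ˢ univ, (((k * p.2 : ℝ) : EReal) - J p) := by
  simp only [legendreTransformOn, coe_sub_iInf, biSup_prod, mem_univ, iSup_pos]
  exact iSup_comm.trans (iSup_congr fun m => iSup_comm)

lemma legendreTransformOn_neg_eq_neg_biInf :
    legendreTransformOn J A (-k) =
      -⨅ m ∈ A, ⨅ w : ℝ, (((k * w : ℝ) : EReal) + (J (m, w) : EReal)) := by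
  have sub_eq_neg (m : X) (w : ℝ) :
      ((-k * w : ℝ) : EReal) - J (m, w) = -(((k * w : ℝ) : EReal) + J (m, w)) := by
    rw [EReal.neg_add (.inl (EReal.coe_ne_bot _)) (.inl (EReal.coe_ne_top _)), neg_mul,
      EReal.coe_neg]
  refine eq_of_forall_ge_iff fun c => ?_
  simp only [legendreTransformOn_eq_biSup, biSup_prod, mem_univ, iSup_pos, sub_eq_neg,
    iSup_le_iff, EReal.neg_le (b := c), le_iInf_iff]

end LegendreTransform

section LikelihoodRatio

lemma measurable_action {Λ : Type*} [MeasurableSpace Λ] (P Q : Measure Λ) (n : ℕ) :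
    Measurable (action P Q n) :=
  (Real.measurable_log.comp (Measure.measurable_rnDeriv P Q).ennreal_toReal).const_mul _

lemma rnDeriv_rpow_ae_eq_exp_action {Λ : Type*} [MeasurableSpace Λ] {P Q : Measure Λ}
    [SigmaFinite P] [SigmaFinite Q] (hQP : Q ≪ P) {n : ℕ} (hn : n ≠ 0) (k : ℝ) :
    ∀ᵐ x ∂Q, P.rnDeriv Q x ^ k = EReal.exp (((-k * action P Q n x : ℝ) : EReal) * n) := by
  filter_upwards [Measure.rnDeriv_lt_top P Q, Measure.rnDeriv_pos' hQP] with x hx_top hx_pos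
  rw [ENNReal.rpow_eq_exp_mul_log, ENNReal.log_pos_real hx_pos.ne' hx_top.ne,
    ← EReal.coe_coe_eq_natCast, ← EReal.coe_mul, ← EReal.coe_mul, action]
  congr 2
  field_simp

variable {X : Type*} {Λ : ℕ → Type*} [∀ n, MeasurableSpace (Λ n)]

/-- The truncated moment `E_{Q_n}[L_n ^ k 1_{M_n ∈ A}]` of the likelihood ratio
`L_n = dP_n / dQ_n`, as a sequence in `n`. -/
noncomputable def likelihoodMoment (P Q : ∀ n, Measure (Λ n)) (M : ∀ n, Λ n → X) (k : ℝ)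
    (A : Set X) (n : ℕ) : ℝ≥0∞ :=
  ∫⁻ x in {x | M n x ∈ A}, (P n).rnDeriv (Q n) x ^ k ∂Q n

variable {P Q : ∀ n, Measure (Λ n)} {M : ∀ n, Λ n → X} {k : ℝ} {A A' : Set X}

lemma likelihoodMoment_mono (h : A ⊆ A') :
    likelihoodMoment P Q M k A ≤ likelihoodMoment P Q M k A' :=
  fun _ => lintegral_mono_set fun _ hx => h hx

variable [MeasurableSpace X] [∀ n, SigmaFinite (P n)] [∀ n, SigmaFinite (Q n)]

lemma likelihoodMoment_one (hPQ : ∀ n, P n ≪ Q n) (hM : ∀ n, Measurable (M n))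
    (hA : MeasurableSet A) : likelihoodMoment P Q M 1 A = fun n => (P n).map (M n) A := by
  funext n
  simp only [likelihoodMoment, ENNReal.rpow_one]
  rw [Measure.setLIntegral_rnDeriv (hPQ n), Measure.map_apply (hM n) hA]
  rfl

lemma likelihoodMoment_eventuallyEq_laplaceIntegral (hQP : ∀ n, Q n ≪ P n)
    (hM : ∀ n, Measurable (M n)) (hA : MeasurableSet A) (k : ℝ) :
    likelihoodMoment P Q M k A =ᶠ[atTop]
      laplaceIntegral (fun n => (Q n).map fun x => (M n x, action (P n) (Q n) n x))
        (fun p => -k * p.2) (A ×ˢ univ) := by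
  filter_upwards [eventually_ne_atTop 0] with n hn
  have measurable_exp : Measurable fun p : X × ℝ => EReal.exp (((-k * p.2 : ℝ) : EReal) * n) := by
    fun_prop
  rw [laplaceIntegral, setLIntegral_map (hA.prod MeasurableSet.univ) measurable_exp
    ((hM n).prodMk (measurable_action _ _ _)), mk_preimage_prod, preimage_univ, inter_univ]
  exact lintegral_congr_ae (ae_restrict_of_ae (rnDeriv_rpow_ae_eq_exp_action (hQP n) hn k))

end LikelihoodRatio

section MomentAsymptotics

variable {X : Type*} [TopologicalSpace X] [MeasurableSpace X] [OpensMeasurableSpace X]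
  {Λ : ℕ → Type*} [∀ n, MeasurableSpace (Λ n)] {P Q : ∀ n, Measure (Λ n)}
  [∀ n, SigmaFinite (P n)] [∀ n, SigmaFinite (Q n)] {M : ∀ n, Λ n → X} {J : X × ℝ → ℝ≥0∞}

theorem legendreTransformOn_le_expGrowthInf_likelihoodMoment (hQP : ∀ n, Q n ≪ P n)
    (hM : ∀ n, Measurable (M n))
    (hJ : SatisfiesLDP (fun n => (Q n).map fun x => (M n x, action (P n) (Q n) n x)) J)
    {G : Set X} (hG : IsOpen G) (k : ℝ) :
    legendreTransformOn J G (-k) ≤ expGrowthInf (likelihoodMoment P Q M k G) := by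
  rw [legendreTransformOn_eq_biSup, expGrowthInf_congr
    (likelihoodMoment_eventuallyEq_laplaceIntegral hQP hM hG.measurableSet k)]
  have hφ : Continuous fun p : X × ℝ => -k * p.2 := by fun_prop
  exact hJ.biSup_sub_le_expGrowthInf_laplaceIntegral hφ.lowerSemicontinuous (hG.prod isOpen_univ)

theorem expGrowthSup_likelihoodMoment_le_legendreTransformOn (hQP : ∀ n, Q n ≪ P n)
    (hM : ∀ n, Measurable (M n))
    (hJ : SatisfiesLDP (fun n => (Q n).map fun x => (M n x, action (P n) (Q n) n x)) J)
    {C : Set X} (hC : IsClosed C) {k p : ℝ} (hk : 0 < k) (hkp : k < p)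
    (hmom : expGrowthSup (likelihoodMoment P Q M p C) < ⊤) :
    expGrowthSup (likelihoodMoment P Q M k C) ≤ legendreTransformOn J C (-k) := by
  have hφ : Continuous fun q : X × ℝ => -k * q.2 := by fun_prop
  have moment_exponent : (fun q : X × ℝ => -p * q.2) = fun q => p / k * (-k * q.2) := by
    funext q
    field_simp
  rw [expGrowthSup_congr
    (likelihoodMoment_eventuallyEq_laplaceIntegral hQP hM hC.measurableSet p),
    moment_exponent] at hmom
  rw [legendreTransformOn_eq_biSup, expGrowthSup_congr
    (likelihoodMoment_eventuallyEq_laplaceIntegral hQP hM hC.measurableSet k)]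
  exact hJ.expGrowthSup_laplaceIntegral_le_biSup_sub hφ.upperSemicontinuous
    (hC.prod isClosed_univ) ((one_lt_div hk).2 hkp) hmom

theorem tendsto_expRate_likelihoodMoment (hQP : ∀ n, Q n ≪ P n) (hM : ∀ n, Measurable (M n))
    (hJ : SatisfiesLDP (fun n => (Q n).map fun x => (M n x, action (P n) (Q n) n x)) J)
    {B : Set X} {k p : ℝ} (hk : 0 < k) (hkp : k < p)
    (hB : legendreTransformOn J (interior B) (-k) = legendreTransformOn J (closure B) (-k))
    (hmom : expGrowthSup (likelihoodMoment P Q M p (closure B)) < ⊤) :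
    Tendsto (fun n => expRate n (likelihoodMoment P Q M k B n)) atTop
      (𝓝 (legendreTransformOn J (closure B) (-k))) := by
  refine tendsto_of_le_liminf_of_limsup_le ?_ ?_
  · rw [liminf_expRate, ← hB]
    exact (legendreTransformOn_le_expGrowthInf_likelihoodMoment hQP hM hJ isOpen_interior k).trans
      (expGrowthInf_monotone (likelihoodMoment_mono interior_subset))
  · rw [limsup_expRate]
    exact (expGrowthSup_monotone (likelihoodMoment_mono subset_closure)).trans
      (expGrowthSup_likelihoodMoment_le_legendreTransformOn hQP hM hJ isClosed_closure hk hkp hmom)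

theorem rate_le_add_joint_rate [RegularSpace X] (hPQ : ∀ n, P n ≪ Q n) (hQP : ∀ n, Q n ≪ P n)
    (hM : ∀ n, Measurable (M n)) {I : X → ℝ≥0∞} (hI : SatisfiesLDP (fun n => (P n).map (M n)) I)
    (hI_lsc : LowerSemicontinuous I)
    (hJ : SatisfiesLDP (fun n => (Q n).map fun x => (M n x, action (P n) (Q n) n x)) J)
    (m : X) (w : ℝ) : (I m : EReal) ≤ w + J (m, w) := by
  refine hI.rate_le_of_forall_isOpen hI_lsc fun G hG hm => ?_
  rw [← likelihoodMoment_one hPQ hM hG.measurableSet]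
  refine le_trans ?_ (legendreTransformOn_le_expGrowthInf_likelihoodMoment hQP hM hJ hG 1)
  rw [legendreTransformOn_neg_eq_neg_biInf, EReal.neg_le_neg_iff]
  simp only [one_mul]
  exact (iInf₂_le m hm).trans (iInf_le _ w)

theorem legendreTransformOn_closure_neg_one [RegularSpace X] (hPQ : ∀ n, P n ≪ Q n)
    (hQP : ∀ n, Q n ≪ P n) (hM : ∀ n, Measurable (M n)) {I : X → ℝ≥0∞}
    (hI : SatisfiesLDP (fun n => (P n).map (M n)) I) (hI_lsc : LowerSemicontinuous I)
    (hJ : SatisfiesLDP (fun n => (Q n).map fun x => (M n x, action (P n) (Q n) n x)) J)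
    {B : Set X} (hB : (⨅ m ∈ interior B, I m) = ⨅ m ∈ closure B, I m) {p : ℝ} (hp : 1 < p)
    (hmom : expGrowthSup (likelihoodMoment P Q M p (closure B)) < ⊤) :
    legendreTransformOn J (closure B) (-1) = -⨅ m ∈ closure B, (I m : EReal) := by
  apply le_antisymm
  · rw [legendreTransformOn_neg_eq_neg_biInf, EReal.neg_le_neg_iff]
    simp only [one_mul]
    exact le_iInf₂ fun m hm => le_iInf fun w =>
      (iInf₂_le m hm).trans (rate_le_add_joint_rate hPQ hQP hM hI hI_lsc hJ m w)
  · have hB_coe : ⨅ m ∈ closure B, (I m : EReal) = ⨅ m ∈ interior B, (I m : EReal) := by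
      simp only [← coe_ennreal_iInf, hB]
    calc -⨅ m ∈ closure B, (I m : EReal)
        ≤ expGrowthInf (fun n => (P n).map (M n) (interior B)) :=
          hB_coe ▸ hI.le_expGrowthInf isOpen_interior
      _ ≤ expGrowthSup (fun n => (P n).map (M n) (closure B)) :=
          (expGrowthInf_monotone fun n => measure_mono interior_subset_closure).trans
            expGrowthInf_le_expGrowthSup
      _ = expGrowthSup (likelihoodMoment P Q M 1 (closure B)) := by
          rw [likelihoodMoment_one hPQ hM isClosed_closure.measurableSet]
      _ ≤ legendreTransformOn J (closure B) (-1) :=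
          expGrowthSup_likelihoodMoment_le_legendreTransformOn hQP hM hJ isClosed_closure
            one_pos hp hmom

end MomentAsymptotics

theorem efficiency_legendre_criterion_general
    {X : Type*} [TopologicalSpace X] [RegularSpace X] [MeasurableSpace X] [OpensMeasurableSpace X]
    {Λ : ℕ → Type*} [∀ n, MeasurableSpace (Λ n)] (P Q : ∀ n, Measure (Λ n))
    [∀ n, SigmaFinite (P n)] [∀ n, SigmaFinite (Q n)]
    (hPQ : ∀ n, P n ≪ Q n) (hQP : ∀ n, Q n ≪ P n)
    (M : ∀ n, Λ n → X) (hM : ∀ n, Measurable (M n)) (B : Set X)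
    (I_P : X → ℝ≥0∞) (hI_P : SatisfiesLDP (fun n => (P n).map (M n)) I_P)
    (hI_P_lsc : LowerSemicontinuous I_P)
    (hI_P_B : (⨅ m ∈ interior B, I_P m) = ⨅ m ∈ closure B, I_P m)
    {p : ℝ} (hp : 2 < p)
    (hmom : limsup (fun n => expRate n (likelihoodMoment P Q M p (closure B) n)) atTop < ⊤)
    (J_Q : X × ℝ → ℝ≥0∞)
    (hJ_Q : SatisfiesLDP (fun n => (Q n).map fun x => (M n x, action (P n) (Q n) n x)) J_Q)
    (hJ_Q_B : (⨅ m ∈ interior B, ⨅ w : ℝ, (((2 * w : ℝ) : EReal) + (J_Q (m, w) : EReal)))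
      = ⨅ m ∈ closure B, ⨅ w : ℝ, (((2 * w : ℝ) : EReal) + (J_Q (m, w) : EReal))) :
    Tendsto (fun n => -expRate n (likelihoodMoment P Q M 2 B n)) atTop
        (𝓝 (2 * ⨅ m ∈ closure B, (I_P m : EReal)))
      ↔ legendreTransformOn J_Q (closure B) (-2)
          = 2 * legendreTransformOn J_Q (closure B) (-1) := by
  rw [limsup_expRate] at hmom
  have second_moment : Tendsto (fun n => -expRate n (likelihoodMoment P Q M 2 B n)) atTop
      (𝓝 (-legendreTransformOn J_Q (closure B) (-2))) :=
    (tendsto_expRate_likelihoodMoment hQP hM hJ_Q two_pos hp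
      (by simp only [legendreTransformOn_neg_eq_neg_biInf, hJ_Q_B]) hmom).neg
  rw [legendreTransformOn_closure_neg_one hPQ hQP hM hI_P hI_P_lsc hJ_Q hI_P_B
    (one_lt_two.trans hp) hmom, mul_neg, ← neg_eq_iff_eq_neg]
  exact ⟨tendsto_nhds_unique second_moment, fun h => h ▸ second_moment⟩

/-- Under Assumptions 1, 2 and 3, `Q_n` is asymptotically efficient if and only if
`λ_Q^B(-2) = 2 λ_Q^B(-1)`, where `λ_Q^B(k) = sup_w (k w - I_Q^B(w))` is the
Legendre–Fenchel transform of `I_Q^B(w) = inf_(m ∈ closure B) J_Q(m,w)`. -/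
theorem efficiency_legendre_criterion
    {D : ℕ} {Λ : ℕ → Type*} [∀ n, MeasurableSpace (Λ n)]
    (P Q : ∀ n, Measure (Λ n))
    [∀ n, IsProbabilityMeasure (P n)] [∀ n, IsProbabilityMeasure (Q n)]
    (habs : ∀ n, P n ≪ Q n ∧ Q n ≪ P n)
    (M : ∀ n, Λ n → (Fin D → ℝ)) (hM : ∀ n, Measurable (M n))
    (B : Set (Fin D → ℝ)) (hB : MeasurableSet B)
    (I_P : (Fin D → ℝ) → ℝ≥0∞)
    (hLDP_M : SatisfiesLDP (fun n => (P n).map (M n)) I_P)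
    (hIPgood : IsGoodRate I_P)
    (hIPB : (⨅ m ∈ interior B, I_P m) = ⨅ m ∈ closure B, I_P m)
    (hIPBfin : (⨅ m ∈ closure B, I_P m) ≠ ⊤)
    (δ : ℝ) (hδ : 0 < δ)
    (hmom : limsup (fun n : ℕ => expRate n
        (∫⁻ x in {x | M n x ∈ closure B},
          ((P n).rnDeriv (Q n) x) ^ ((2 : ℝ) + δ) ∂(Q n))) atTop < ⊤)
    (J_P J_Q : (Fin D → ℝ) × ℝ → ℝ≥0∞)
    (hLDP_P : SatisfiesLDP (fun n => (P n).map (fun x => (M n x, action (P n) (Q n) n x))) J_P)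
    (hLDP_Q : SatisfiesLDP (fun n => (Q n).map (fun x => (M n x, action (P n) (Q n) n x))) J_Q)
    (hJPgood : IsGoodRate J_P) (hJQgood : IsGoodRate J_Q)
    (hdom : {p | J_P p ≠ ⊤} = {p | J_Q p ≠ ⊤})
    (hne : {p | J_P p ≠ ⊤}.Nonempty)
    (hBgood : (⨅ m ∈ interior B, ⨅ w : ℝ, (((2 * w : ℝ) : EReal) + (J_Q (m, w) : EReal)))
      = ⨅ m ∈ closure B, ⨅ w : ℝ, (((2 * w : ℝ) : EReal) + (J_Q (m, w) : EReal)))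
    :
    Tendsto (fun n : ℕ => -expRate n (∫⁻ x in {x | M n x ∈ B}, ((P n).rnDeriv (Q n) x) ^ 2 ∂(Q n))) atTop
        (𝓝 (2 * ⨅ m ∈ closure B, (I_P m : EReal)))
      ↔ (⨆ w : ℝ, ((((-2 : ℝ) * w : ℝ) : EReal) - ((⨅ m ∈ closure B, J_Q (m, w)) : EReal)))
          = 2 * ⨆ w : ℝ, ((((-1 : ℝ) * w : ℝ) : EReal)
            - ((⨅ m ∈ closure B, J_Q (m, w)) : EReal)) := by
  simpa only [likelihoodMoment, legendreTransformOn, ENNReal.rpow_two] using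
    efficiency_legendre_criterion_general P Q (fun n => (habs n).1) (fun n => (habs n).2) M hM B I_P
      hLDP_M hIPgood.1 hIPB (lt_add_of_pos_right 2 hδ) hmom J_Q hLDP_Q hBgood
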